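/- arXiv:2101.11295 — 9 statements merged into one kernel-verified Lean document; each statement's English description precedes it below -/
import Mathlib

section
/- Let β ∈ (0,1), let g : X × U → ℝ be a stage cost bounded on Y, and let J and V denote the associated discounted cost and optimal value function. Let x₀ ∈ 𝕏, let u be admissible for x₀ with trajectory x(·) = x_u(·,x₀), and let δ ≥ 0 satisfy J(x₀,u) ≤ V(x₀) + δ. Then for every k ∈ ℕ the shifted control u(·+k) is admissible for x(k) and J(x(k), u(·+k)) ≤ V(x(k)) + δ/β^k. -/
/-!
By the dynamic programming principle, prepending one control step to an admissible control `v` for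
`f x a` gives the cost `g x a + β J(f x a, v)`, so `V(x) ≤ g x a + β V(f x a)`. Comparing with
`J(x, u) = g x (u 0) + β J(f x (u 0), u(· + 1))`, one shift of a `δ`-optimal control is
`δ / β`-optimal at the successor state (`shift_one_near_optimal`); the general claim follows by
induction on the number of shifts. Boundedness of `g` on `Y` enters twice: it makes the discounted
series summable, so that its first term can be split off, and it makes the set of attainable costs
bounded below, so that `V` is a genuine infimum.
-/

open scoped BigOperators

variable {X U : Type*} [NormedAddCommGroup X] [NormedAddCommGroup U]

/-- Trajectory of the controlled system `x(k+1) = f(x(k), u(k))`, `x(0) = x₀`. -/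
def traj (f : X → U → X) (x₀ : X) (u : ℕ → U) : ℕ → X
  | 0 => x₀
  | k + 1 => f (traj f x₀ u k) (u k)

/-- A control sequence is admissible for `x₀` if the state-control pairs stay in `Y`. -/
def Admissible (f : X → U → X) (Y : Set (X × U)) (x₀ : X) (u : ℕ → U) : Prop :=
  ∀ k : ℕ, (traj f x₀ u k, u k) ∈ Y

/-- The state constraint set `𝕏 = {x | ∃ u, (x,u) ∈ Y}`. -/
def stateSet (Y : Set (X × U)) : Set X := {x : X | ∃ u : U, (x, u) ∈ Y}

/-- Discounted infinite-horizon cost functional. -/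
noncomputable def Jinf (β : ℝ) (g : X → U → ℝ) (f : X → U → X) (x₀ : X) (u : ℕ → U) : ℝ :=
  ∑' k : ℕ, β ^ k * g (traj f x₀ u k) (u k)

/-- Optimal value function of the discounted problem. -/
noncomputable def Vinf (β : ℝ) (g : X → U → ℝ) (f : X → U → X) (Y : Set (X × U)) (x₀ : X) : ℝ :=
  sInf {r : ℝ | ∃ u : ℕ → U, Admissible f Y x₀ u ∧ Jinf β g f x₀ u = r}

/-- Rotated stage cost `ℓ̃(x,u) = ℓ(x,u) − ℓ(xe,ue) + λ(x) − βλ(f(x,u))`. -/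
def rot (β : ℝ) (g : X → U → ℝ) (f : X → U → X) (lam : X → ℝ) (xe : X) (ue : U)
    (x : X) (u : U) : ℝ :=
  g x u - g xe ue + lam x - β * lam (f x u)

/-- Class `K∞` comparison functions. -/
structure KInfty (α : ℝ → ℝ) : Prop where
  cont : ContinuousOn α (Set.Ici 0)
  mono : StrictMonoOn α (Set.Ici 0)
  zero : α 0 = 0
  unbounded : ∀ c : ℝ, ∃ r : ℝ, 0 ≤ r ∧ c < α r

theorem traj_add (f : X → U → X) (x : X) (u : ℕ → U) (k i : ℕ) :
    traj f x u (i + k) = traj f (traj f x u k) (fun j => u (j + k)) i := by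
  induction i with
  | zero => rw [Nat.zero_add]; rfl
  | succ i ih =>
    rw [Nat.add_right_comm]
    simp only [traj, ih]

theorem traj_succ_left (f : X → U → X) (x : X) (u : ℕ → U) (i : ℕ) :
    traj f x u (i + 1) = traj f (f x (u 0)) (fun j => u (j + 1)) i :=
  traj_add f x u 1 i

theorem Admissible.shift {f : X → U → X} {Y : Set (X × U)} {x : X} {u : ℕ → U}
    (hu : Admissible f Y x u) (k : ℕ) :
    Admissible f Y (traj f x u k) (fun i => u (i + k)) := fun i => by
  rw [← traj_add]
  exact hu (i + k)

/-- Concatenation of a feasible first step with an admissible control for the successor state. -/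
theorem Admissible.cons {f : X → U → X} {Y : Set (X × U)} {x : X} {a : U} {v : ℕ → U}
    (ha : (x, a) ∈ Y) (hv : Admissible f Y (f x a) v) :
    Admissible f Y x (fun i => Nat.casesOn i a v) := by
  intro i
  cases i with
  | zero => exact ha
  | succ i =>
    rw [traj_succ_left]
    exact hv i

theorem summable_cost {f : X → U → X} {Y : Set (X × U)} {g : X → U → ℝ} {β B : ℝ}
    (hβ : β ∈ Set.Ioo (0 : ℝ) 1) (hB : ∀ p ∈ Y, |g p.1 p.2| ≤ B)
    {x : X} {u : ℕ → U} (hu : Admissible f Y x u) :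
    Summable fun k : ℕ => β ^ k * g (traj f x u k) (u k) := by
  refine Summable.of_norm_bounded
    ((summable_geometric_of_lt_one hβ.1.le hβ.2).mul_right B) fun k => ?_
  rw [Real.norm_eq_abs, abs_mul, abs_of_nonneg (pow_nonneg hβ.1.le k)]
  exact mul_le_mul_of_nonneg_left (hB _ (hu k)) (pow_nonneg hβ.1.le k)

theorem Jinf_eq_add {f : X → U → X} {Y : Set (X × U)} {g : X → U → ℝ} {β B : ℝ}
    (hβ : β ∈ Set.Ioo (0 : ℝ) 1) (hB : ∀ p ∈ Y, |g p.1 p.2| ≤ B)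
    {x : X} {u : ℕ → U} (hu : Admissible f Y x u) :
    Jinf β g f x u = g x (u 0) + β * Jinf β g f (f x (u 0)) (fun i => u (i + 1)) := by
  unfold Jinf
  rw [(summable_cost hβ hB hu).tsum_eq_zero_add, ← tsum_mul_left]
  simp only [traj_succ_left, pow_succ', mul_assoc, pow_zero, one_mul]
  rfl

theorem Vinf_le_Jinf {f : X → U → X} {Y : Set (X × U)} {g : X → U → ℝ} {β B : ℝ}
    (hβ : β ∈ Set.Ioo (0 : ℝ) 1) (hB : ∀ p ∈ Y, |g p.1 p.2| ≤ B)
    {x : X} {u : ℕ → U} (hu : Admissible f Y x u) :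
    Vinf β g f Y x ≤ Jinf β g f x u := by
  refine csInf_le ⟨∑' k : ℕ, β ^ k * (-B), ?_⟩ ⟨u, hu, rfl⟩
  rintro _ ⟨v, hv, rfl⟩
  refine Summable.tsum_le_tsum (fun k => ?_)
    ((summable_geometric_of_lt_one hβ.1.le hβ.2).mul_right (-B)) (summable_cost hβ hB hv)
  exact mul_le_mul_of_nonneg_left (abs_le.mp (hB _ (hv k))).1 (pow_nonneg hβ.1.le k)

/-- Every competitor `v` at the successor state extends to a competitor at `x` sharing the first
step of `u`, so near-optimality of `u` at `x` bounds `β J(f x (u 0), u(· + 1))` by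
`β J(f x (u 0), v) + δ`. -/
theorem shift_one_near_optimal {f : X → U → X} {Y : Set (X × U)} {g : X → U → ℝ} {β B : ℝ}
    (hβ : β ∈ Set.Ioo (0 : ℝ) 1) (hB : ∀ p ∈ Y, |g p.1 p.2| ≤ B)
    {x : X} {u : ℕ → U} (hu : Admissible f Y x u) {δ : ℝ}
    (hJ : Jinf β g f x u ≤ Vinf β g f Y x + δ) :
    Jinf β g f (f x (u 0)) (fun i => u (i + 1)) ≤ Vinf β g f Y (f x (u 0)) + δ / β := by
  rw [← sub_le_iff_le_add]
  refine le_csInf ⟨_, _, hu.shift 1, rfl⟩ ?_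
  rintro _ ⟨v, hv, rfl⟩
  have hw : Admissible f Y x (fun i => Nat.casesOn i (u 0) v) := Admissible.cons (hu 0) hv
  have hV : Vinf β g f Y x ≤ g x (u 0) + β * Jinf β g f (f x (u 0)) v :=
    (Vinf_le_Jinf hβ hB hw).trans_eq (Jinf_eq_add hβ hB hw)
  rw [Jinf_eq_add hβ hB hu] at hJ
  have key : β * Jinf β g f (f x (u 0)) (fun i => u (i + 1)) ≤
      β * Jinf β g f (f x (u 0)) v + δ := by
    linarith
  rw [sub_le_iff_le_add, ← mul_le_mul_iff_right₀ hβ.1, mul_add, mul_div_cancel₀ _ hβ.1.ne']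
  exact key

/-- shifted controls of near-optimal trajectories are admissible and
near-optimal with degraded accuracy `δ/β^k`. -/
theorem shifted_near_optimality
    (f : X → U → X) (Y : Set (X × U)) (g : X → U → ℝ)
    (β : ℝ) (hβ : β ∈ Set.Ioo (0 : ℝ) 1)
    (hg : ∃ B : ℝ, ∀ p ∈ Y, |g p.1 p.2| ≤ B)
    (hadm : ∀ x₀ ∈ stateSet Y, ∃ u : ℕ → U, Admissible f Y x₀ u)
    (x₀ : X) (hx₀ : x₀ ∈ stateSet Y) (u : ℕ → U) (hu : Admissible f Y x₀ u)
    (δ : ℝ) (hδ : 0 ≤ δ)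
    (hJ : Jinf β g f x₀ u ≤ Vinf β g f Y x₀ + δ) (k : ℕ) :
    Admissible f Y (traj f x₀ u k) (fun i => u (i + k)) ∧
      Jinf β g f (traj f x₀ u k) (fun i => u (i + k)) ≤
        Vinf β g f Y (traj f x₀ u k) + δ / β ^ k := by
  obtain ⟨B, hB⟩ := hg
  refine ⟨hu.shift k, ?_⟩
  induction k with
  | zero => simpa [traj] using hJ
  | succ k ih =>
    have h := shift_one_near_optimal hβ hB (hu.shift k) ih
    rw [div_div, ← pow_succ] at h
    simpa only [traj, Nat.zero_add, Nat.add_assoc, Nat.add_comm 1 k] using h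
end

section
/- Under the assumptions of the global discounted turnpike theorem (β ∈ (0,1); discounted strict dissipativity at (x^β,u^β) with bounded storage λ and α ∈ K∞; ℓ bounded on Y; Ṽ_∞(x) ≤ α_V(‖x − x^β‖) on 𝕏 for some α_V ∈ K∞; Ṽ_∞(x) ≤ C · inf{ℓ̃(x,u) : (x,u) ∈ Y} on 𝕏 with C ≥ 1 and C < 1/(1−β)), every optimal trajectory converges to the equilibrium: if x₀ ∈ 𝕏 and u is admissible for x₀ with J_∞(x₀,u) = V_∞(x₀), then for each ε > 0 the set {k ∈ ℕ : ‖x_u(k,x₀) − x^β‖ ≥ ε} is finite; in particular x_u(k,x₀) → x^β as k → ∞. -/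
/-!
For admissible controls the rotated cost differs from the original one by the constant
`lam x₀ - ℓ xe ue / (1 - β)`, because the storage terms telescope (`Jinf_rot`). Hence the optimal
control also minimises the rotated cost, and by dynamic programming (`IsOptimal.tail`) so does each
of its tails. Write `r k ≥ 0` for the rotated stage cost along the trajectory and `W k` for the
rotated cost of the tail starting at time `k`. Then `W k = r k + β * W (k + 1)`, and optimality of
the tail together with the bound `Ṽ ≤ C * inf ℓ̃` yields `W k ≤ C * r k`. Therefore
`W (k + 1) ≤ ((1 - 1 / C) / β) * W k`, and the condition `C < 1 / (1 - β)` says exactly that this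
factor is less than one. So `W k → 0`, and `α ‖x k - xe‖ ≤ r k ≤ W k` forces `x k → xe`.
-/

open scoped BigOperators

variable {X U : Type*} [NormedAddCommGroup X] [NormedAddCommGroup U]

/-- `u` is admissible from `x` and minimises the discounted cost with stage cost `g` among all
admissible controls. -/
def IsOptimal (β : ℝ) (g : X → U → ℝ) (f : X → U → X) (Y : Set (X × U)) (x : X) (u : ℕ → U) :
    Prop :=
  Admissible f Y x u ∧ ∀ v, Admissible f Y x v → Jinf β g f x u ≤ Jinf β g f x v

theorem traj_shift (f : X → U → X) (x : X) (u : ℕ → U) (k : ℕ) :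
    traj f (f x (u 0)) (fun j => u (j + 1)) k = traj f x u (k + 1) := by
  induction k with
  | zero => rfl
  | succ k ih => rw [traj, ih]; rfl

theorem summable_discounted {β : ℝ} (hβ : β ∈ Set.Ioo (0 : ℝ) 1) {a : ℕ → ℝ} {B : ℝ}
    (ha : ∀ k, |a k| ≤ B) : Summable fun k => β ^ k * a k := by
  refine Summable.of_norm_bounded
    ((summable_geometric_of_lt_one hβ.1.le hβ.2).mul_right B) fun k => ?_
  rw [Real.norm_eq_abs, abs_mul, abs_of_pos (pow_pos hβ.1 k)]
  exact mul_le_mul_of_nonneg_left (ha k) (pow_pos hβ.1 k).le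

theorem Jinf_succ {β : ℝ} (hβ : β ∈ Set.Ioo (0 : ℝ) 1) {g : X → U → ℝ} {f : X → U → X}
    {Y : Set (X × U)} {B : ℝ} (hg : ∀ p ∈ Y, |g p.1 p.2| ≤ B) {x : X} {u : ℕ → U}
    (hu : Admissible f Y x u) :
    Jinf β g f x u = g x (u 0) + β * Jinf β g f (f x (u 0)) (fun j => u (j + 1)) := by
  have hs := summable_discounted hβ (fun k => hg _ (hu k))
  unfold Jinf
  rw [hs.tsum_eq_zero_add, ← tsum_mul_left]
  simp only [traj_shift, pow_zero, one_mul]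
  congr 1
  exact tsum_congr fun k => by ring

/-- Rotating the stage cost changes the discounted cost only by a constant depending on the
initial state, since the storage terms telescope. -/
theorem Jinf_rot {β : ℝ} (hβ : β ∈ Set.Ioo (0 : ℝ) 1) {ℓ : X → U → ℝ} {f : X → U → X}
    {Y : Set (X × U)} {B L : ℝ} (hℓ : ∀ p ∈ Y, |ℓ p.1 p.2| ≤ B) {lam : X → ℝ}
    (hlam : ∀ x, |lam x| ≤ L) (xe : X) (ue : U) {x : X} {u : ℕ → U}
    (hu : Admissible f Y x u) :
    Jinf β (rot β ℓ f lam xe ue) f x u = Jinf β ℓ f x u - ℓ xe ue * (1 - β)⁻¹ + lam x := by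
  have h1 := (summable_discounted hβ (fun k => hℓ _ (hu k))).hasSum
  have h2 := (hasSum_geometric_of_lt_one hβ.1.le hβ.2).mul_left (ℓ xe ue)
  have hs := summable_discounted hβ (fun k => hlam (traj f x u k))
  have h4 := ((summable_nat_add_iff 1).2 hs).hasSum
  have h5 := hs.tsum_eq_zero_add
  have h := ((h1.sub h2).add hs.hasSum).sub h4
  unfold Jinf
  refine Eq.trans (tsum_congr fun k => ?_) (h.tsum_eq.trans ?_)
  · simp only [rot, traj]
    ring
  · rw [h5]
    simp only [pow_zero, one_mul, traj]
    ring

/-- Principle of optimality: deleting the first step of an optimal control leaves an optimal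
control for the successor state. -/
theorem IsOptimal.shift {β : ℝ} (hβ : β ∈ Set.Ioo (0 : ℝ) 1) {g : X → U → ℝ} {f : X → U → X}
    {Y : Set (X × U)} {B : ℝ} (hg : ∀ p ∈ Y, |g p.1 p.2| ≤ B) {x : X} {u : ℕ → U}
    (h : IsOptimal β g f Y x u) : IsOptimal β g f Y (f x (u 0)) (fun j => u (j + 1)) := by
  refine ⟨fun k => by rw [traj_shift]; exact h.1 (k + 1), fun v hv => ?_⟩
  -- Any competitor `v` from the successor state is preceded by `u 0` to compete from `x`.
  let w : ℕ → U := fun n => Nat.casesOn n (u 0) v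
  have hw : Admissible f Y x w := by
    intro k
    cases k with
    | zero => exact h.1 0
    | succ k =>
      rw [← traj_shift]
      exact hv k
  have h1 := h.2 w hw
  rw [Jinf_succ hβ hg h.1, Jinf_succ hβ hg hw] at h1
  have h2 : β * Jinf β g f (f x (u 0)) (fun j => u (j + 1)) ≤ β * Jinf β g f (f x (u 0)) v :=
    le_of_add_le_add_left h1
  exact le_of_mul_le_mul_left h2 hβ.1

theorem IsOptimal.tail {β : ℝ} (hβ : β ∈ Set.Ioo (0 : ℝ) 1) {g : X → U → ℝ} {f : X → U → X}
    {Y : Set (X × U)} {B : ℝ} (hg : ∀ p ∈ Y, |g p.1 p.2| ≤ B) {x : X} {u : ℕ → U}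
    (h : IsOptimal β g f Y x u) (k : ℕ) :
    IsOptimal β g f Y (traj f x u k) (fun j => u (j + k)) := by
  induction k with
  | zero => exact h
  | succ k ih =>
    have := ih.shift hβ hg
    simpa only [traj, Nat.zero_add, Nat.add_assoc, Nat.add_comm 1 k] using this

/-- The scalar core: a value `W` satisfying the dynamic programming recursion and dominated by
`C` times the stage cost tends to zero, since it contracts by the factor `(1 - 1 / C) / β < 1`. -/
theorem tendsto_zero_of_recursion {β C : ℝ} (hβ : β ∈ Set.Ioo (0 : ℝ) 1) (hC1 : 1 ≤ C)
    (hC2 : C < 1 / (1 - β)) {W r : ℕ → ℝ} (hW : ∀ k, 0 ≤ W k)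
    (hrec : ∀ k, W k = r k + β * W (k + 1)) (hWC : ∀ k, W k ≤ C * r k) :
    Filter.Tendsto W Filter.atTop (nhds 0) := by
  have hC0 : 0 < C := by linarith
  have hβ0 := hβ.1
  have hb : 0 < 1 - β := sub_pos.2 hβ.2
  have hinv : C⁻¹ ≤ 1 := inv_le_one_of_one_le₀ hC1
  have hq0 : 0 ≤ (1 - C⁻¹) / β := div_nonneg (by linarith) hβ0.le
  have hq1 : (1 - C⁻¹) / β < 1 := by
    rw [div_lt_one hβ0]
    have : 1 - β < C⁻¹ := by
      rw [lt_inv_comm₀ hb hC0, ← one_div]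
      exact hC2
    linarith
  have hstep : ∀ k, W (k + 1) ≤ (1 - C⁻¹) / β * W k := by
    intro k
    have h1 : C⁻¹ * W k ≤ r k := by
      rw [inv_mul_le_iff₀ hC0]
      exact hWC k
    rw [div_mul_eq_mul_div, le_div_iff₀ hβ0]
    have := hrec k
    linarith
  have hgeom : ∀ k, W k ≤ ((1 - C⁻¹) / β) ^ k * W 0 := by
    intro k
    induction k with
    | zero => simp
    | succ k ih =>
      calc W (k + 1) ≤ (1 - C⁻¹) / β * W k := hstep k
        _ ≤ (1 - C⁻¹) / β * (((1 - C⁻¹) / β) ^ k * W 0) := mul_le_mul_of_nonneg_left ih hq0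
        _ = ((1 - C⁻¹) / β) ^ (k + 1) * W 0 := by ring
  refine squeeze_zero hW hgeom ?_
  simpa using (tendsto_pow_atTop_nhds_zero_of_lt_one hq0 hq1).mul_const (W 0)

/-- under the assumptions of the global discounted turnpike theorem,
optimal trajectories converge to the equilibrium. -/
theorem optimal_trajectory_convergence
    (f : X → U → X) (Y : Set (X × U)) (ℓ : X → U → ℝ) (lam : X → ℝ)
    (β : ℝ) (hβ : β ∈ Set.Ioo (0 : ℝ) 1)
    (xe : X) (ue : U) (heq : (xe, ue) ∈ Y) (hfix : f xe ue = xe)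
    (hlam_bdd : ∃ B : ℝ, ∀ x : X, |lam x| ≤ B)
    (hlam0 : lam xe = 0)
    (α : ℝ → ℝ) (hα : KInfty α)
    (hdiss : ∀ p ∈ Y, f p.1 p.2 ∈ stateSet Y →
      α ‖p.1 - xe‖ ≤ ℓ p.1 p.2 - ℓ xe ue + lam p.1 - β * lam (f p.1 p.2))
    (hℓ : ∃ B : ℝ, ∀ p ∈ Y, |ℓ p.1 p.2| ≤ B)
    (hadm : ∀ x₀ ∈ stateSet Y, ∃ u : ℕ → U, Admissible f Y x₀ u)
    (α_V : ℝ → ℝ) (hαV : KInfty α_V)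
    (hVup : ∀ x ∈ stateSet Y,
      Vinf β (rot β ℓ f lam xe ue) f Y x ≤ α_V ‖x - xe‖)
    (C : ℝ) (hC1 : 1 ≤ C) (hC2 : C < 1 / (1 - β))
    (hVC : ∀ x ∈ stateSet Y,
      Vinf β (rot β ℓ f lam xe ue) f Y x ≤
        C * sInf {r : ℝ | ∃ v : U, (x, v) ∈ Y ∧ rot β ℓ f lam xe ue x v = r})
    (x₀ : X) (hx₀ : x₀ ∈ stateSet Y) (u : ℕ → U) (hu : Admissible f Y x₀ u)
    (hopt : Jinf β ℓ f x₀ u = Vinf β ℓ f Y x₀) :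
    (∀ ε > (0 : ℝ), {k : ℕ | ε ≤ ‖traj f x₀ u k - xe‖}.Finite) ∧
      Filter.Tendsto (fun k => traj f x₀ u k) Filter.atTop (nhds xe) := by
  obtain ⟨L, hL⟩ := hlam_bdd
  obtain ⟨B, hB⟩ := hℓ
  have hβ0 := hβ.1
  have hC0 : 0 ≤ C := by linarith
  set g := rot β ℓ f lam xe ue with hgdef
  have hg : ∀ p ∈ Y, |g p.1 p.2| ≤ B + |ℓ xe ue| + L + β * L := by
    intro p hp
    have e : g p.1 p.2 = ℓ p.1 p.2 - ℓ xe ue + lam p.1 - β * lam (f p.1 p.2) := rfl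
    have h1 := abs_le.1 (hB p hp)
    have h2 := abs_le.1 (hL p.1)
    have h3 := abs_le.1 (hL (f p.1 p.2))
    have h4 := mul_le_mul_of_nonneg_left h3.1 hβ0.le
    have h5 := mul_le_mul_of_nonneg_left h3.2 hβ0.le
    have h6 := neg_abs_le (ℓ xe ue)
    have h7 := le_abs_self (ℓ xe ue)
    rw [e, abs_le]
    constructor <;> linarith
  have hαnn : ∀ x : X, 0 ≤ α ‖x - xe‖ := fun x => by
    have := hα.mono.monotoneOn (Set.mem_Ici.2 le_rfl) (Set.mem_Ici.2 (norm_nonneg (x - xe)))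
      (norm_nonneg _)
    rwa [hα.zero] at this
  -- Along admissible trajectories the successor state stays in the state constraint set, which is
  -- what makes the dissipation inequality applicable.
  have hlow : ∀ x v, Admissible f Y x v → ∀ k, α ‖traj f x v k - xe‖ ≤ g (traj f x v k) (v k) :=
    fun x v hv k => hdiss _ (hv k) ⟨v (k + 1), hv (k + 1)⟩
  have hJnn : ∀ x v, Admissible f Y x v → 0 ≤ Jinf β g f x v := fun x v hv =>
    tsum_nonneg fun k => mul_nonneg (pow_nonneg hβ0.le k) ((hαnn _).trans (hlow x v hv k))
  have hoptg : IsOptimal β g f Y x₀ u := by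
    refine ⟨hu, fun v hv => ?_⟩
    rw [hgdef, Jinf_rot hβ hB hL xe ue hu, Jinf_rot hβ hB hL xe ue hv, hopt]
    have : Vinf β ℓ f Y x₀ ≤ Jinf β ℓ f x₀ v := by
      refine csInf_le ⟨ℓ xe ue * (1 - β)⁻¹ - lam x₀, ?_⟩ ⟨v, hv, rfl⟩
      rintro _ ⟨w, hw, rfl⟩
      have := hJnn x₀ w hw
      rw [hgdef, Jinf_rot hβ hB hL xe ue hw] at this
      linarith
    linarith
  have htail := hoptg.tail hβ hg
  let W : ℕ → ℝ := fun k => Jinf β g f (traj f x₀ u k) (fun j => u (j + k))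
  let r : ℕ → ℝ := fun k => g (traj f x₀ u k) (u k)
  have hW : ∀ k, 0 ≤ W k := fun k => hJnn _ _ (htail k).1
  have hrec : ∀ k, W k = r k + β * W (k + 1) := by
    intro k
    have := Jinf_succ hβ hg (htail k).1
    simpa only [W, r, traj, Nat.zero_add, Nat.add_assoc, Nat.add_comm 1 k] using this
  have hWC : ∀ k, W k ≤ C * r k := by
    intro k
    have h1 : W k ≤ Vinf β g f Y (traj f x₀ u k) := by
      refine le_csInf ⟨_, _, (htail k).1, rfl⟩ ?_
      rintro _ ⟨v, hv, rfl⟩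
      exact (htail k).2 v hv
    refine (h1.trans (hVC _ ⟨u k, hu k⟩)).trans (mul_le_mul_of_nonneg_left ?_ hC0)
    refine csInf_le ⟨-(B + |ℓ xe ue| + L + β * L), ?_⟩ ⟨u k, hu k, rfl⟩
    rintro _ ⟨v, hv, rfl⟩
    exact (abs_le.1 (hg _ hv)).1
  have hlim := tendsto_zero_of_recursion hβ hC1 hC2 hW hrec hWC
  have hev : ∀ ε > (0 : ℝ), ∀ᶠ k in Filter.atTop, ‖traj f x₀ u k - xe‖ < ε := by
    intro ε hε
    have hαε : 0 < α ε := by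
      have := hα.mono (Set.mem_Ici.2 le_rfl) (Set.mem_Ici.2 hε.le) hε
      rwa [hα.zero] at this
    filter_upwards [hlim.eventually (gt_mem_nhds hαε)] with k hk
    by_contra! hge
    have h1 := hα.mono.monotoneOn (Set.mem_Ici.2 hε.le) (Set.mem_Ici.2 (norm_nonneg _)) hge
    have h2 : α ‖traj f x₀ u k - xe‖ ≤ r k := hlow x₀ u hu k
    have h3 := hrec k
    have h4 := mul_nonneg hβ0.le (hW (k + 1))
    linarith
  constructor
  · intro ε hε
    have := hev ε hε
    rw [← Nat.cofinite_eq_atTop, Filter.eventually_cofinite] at this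
    simpa only [not_lt] using this
  · rw [tendsto_iff_norm_sub_tendsto_zero]
    refine Metric.tendsto_nhds.2 fun ε hε => (hev ε hε).mono fun k hk => ?_
    simpa using hk
end

section
/- (Necessary reachability condition for the turnpike property.) Let β ∈ (0,1), let ℓ be bounded on Y, fix ε > 0 and a bounded set 𝕏_b ⊆ 𝕏, and suppose there exists P ∈ ℕ such that for each M ∈ ℕ there is δ > 0 with the property that every x₀ ∈ 𝕏_b and every admissible u with J_∞(x₀,u) ≤ V_∞(x₀) + δ satisfy #{k ∈ {0,…,M} : ‖x_u(k,x₀) − x^β‖ ≥ ε} ≤ P. Then for each x₀ ∈ 𝕏_b there exist an admissible control u and an index k ≤ P + 1 such that ‖x_u(k,x₀) − x^β‖ < ε. -/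
/-!
A `δ`-optimal control exists for every `δ > 0`. Taking the `δ` that the turnpike property supplies
for the horizon `M = P`, at most `P` of the `P + 1` states at times `0, …, P` lie outside the
`ε`-ball around `xe`, so by the pigeonhole principle one of them lies inside it.
-/

open scoped BigOperators

variable {X U : Type*} [NormedAddCommGroup X] [NormedAddCommGroup U]

/-- the turnpike property implies that from each initial value in `𝕏_b`
the `ε`-ball around the equilibrium can be reached within `P+1` steps. -/
theorem turnpike_necessary_reachability
    (f : X → U → X) (Y : Set (X × U)) (ℓ : X → U → ℝ)
    (β : ℝ) (hβ : β ∈ Set.Ioo (0 : ℝ) 1)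
    (hℓ : ∃ B : ℝ, ∀ p ∈ Y, |ℓ p.1 p.2| ≤ B)
    (hadm : ∀ x₀ ∈ stateSet Y, ∃ u : ℕ → U, Admissible f Y x₀ u)
    (xe : X) (hxe : xe ∈ stateSet Y)
    (ε : ℝ) (hε : 0 < ε)
    (Xb : Set X) (hXb : Xb ⊆ stateSet Y) (hXbb : Bornology.IsBounded Xb)
    (P : ℕ)
    (hTP : ∀ M : ℕ, ∃ δ > (0 : ℝ), ∀ x₀ ∈ Xb, ∀ u : ℕ → U, Admissible f Y x₀ u →
      Jinf β ℓ f x₀ u ≤ Vinf β ℓ f Y x₀ + δ →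
      Set.ncard {k : ℕ | k ≤ M ∧ ε ≤ ‖traj f x₀ u k - xe‖} ≤ P) :
    ∀ x₀ ∈ Xb, ∃ u : ℕ → U, Admissible f Y x₀ u ∧
      ∃ k ≤ P + 1, ‖traj f x₀ u k - xe‖ < ε := by
  intro x₀ hx₀
  -- With the horizon `M = P` there are already `P + 1` time indices, one more than allowed.
  obtain ⟨δ, hδ, hT⟩ := hTP P
  obtain ⟨u₀, hu₀⟩ := hadm x₀ (hXb hx₀)
  -- A `δ`-optimal control exists since the set of attainable costs is nonempty. Its boundedness
  -- below plays no role: a number exceeding the `sInf` of a nonempty set is not a lower bound.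
  obtain ⟨r, ⟨u, hu, rfl⟩, hr⟩ := Real.lt_sInf_add_pos
    (s := {r : ℝ | ∃ u : ℕ → U, Admissible f Y x₀ u ∧ Jinf β ℓ f x₀ u = r})
    ⟨_, u₀, hu₀, rfl⟩ hδ
  have hcard := hT x₀ hx₀ u hu hr.le
  refine ⟨u, hu, ?_⟩
  by_contra! hfar
  have hall : {k : ℕ | k ≤ P ∧ ε ≤ ‖traj f x₀ u k - xe‖} = ↑(Finset.range (P + 1)) := by
    ext k
    simp only [Set.mem_ofPred_eq, Finset.coe_range, Set.mem_Iio, Nat.lt_succ_iff]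
    exact ⟨fun h => h.1, fun h => ⟨h, hfar k (by omega)⟩⟩
  rw [hall, Set.ncard_coe_finset, Finset.card_range] at hcard
  omega
end

section
/- (Lower bound on the rotated value function on an invariant set.) Let β ∈ (0,1), let ℓ be bounded on Y, and assume the system is locally discounted strictly dissipative at (x_l^β,u_l^β) on the neighbourhood X_N with K∞ function α_β. Then: (a) for every x₀ ∈ X_N and every control u admissible for x₀ whose trajectory satisfies x_u(k,x₀) ∈ X_N for all k ≥ 0, one has J̃_∞(x₀,u) ≥ α_β(‖x₀ − x_l^β‖); (b) consequently, if X_inv ⊆ X_N is a set such that for each x ∈ X_inv there is an admissible control u with J̃_∞(x,u) = Ṽ_∞(x) whose trajectory remains in X_inv for all k ≥ 0, then Ṽ_∞(x) ≥ α_β(‖x − x_l^β‖) for all x ∈ X_inv. -/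
/-!
Along a trajectory in `X_N` every rotated stage cost is nonnegative, since it dominates
`αβ ‖x(k) - xl‖ ≥ 0`. Hence the discounted rotated cost dominates its `k = 0` term, which is at
least `αβ ‖x₀ - xl‖`, provided the series converges; a divergent series would have the junk
value `0`. Convergence holds because the storage terms telescope: the `n`-th partial sum equals
`∑ k < n, β ^ k (ℓ(x(k),u(k)) - ℓ(xl,ul)) + lam x₀ - β ^ n lam x(n)`, which is bounded above as `ℓ`
is bounded on `Y` and `lam` is bounded below (`sum_rot_le`). The claim on the value function
follows by evaluating the cost along the optimal control that stays in the invariant set.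
-/

open scoped BigOperators

variable {X U : Type*} [NormedAddCommGroup X] [NormedAddCommGroup U]

/-- Telescoped upper bound for the partial sums of the discounted rotated cost. The constant `K`
is a bound on `g - g(xe,ue)` along the trajectory, divided by `1 - β`. -/
lemma sum_rot_le {f : X → U → X} {g : X → U → ℝ} {lam : X → ℝ} {β K : ℝ} (hβ : 0 ≤ β)
    {xe : X} {ue : U} {x₀ : X} {u : ℕ → U}
    (hK : ∀ k, g (traj f x₀ u k) (u k) - g xe ue ≤ K * (1 - β)) (n : ℕ) :
    ∑ k ∈ Finset.range n, β ^ k * rot β g f lam xe ue (traj f x₀ u k) (u k) ≤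
      K * (1 - β ^ n) + lam x₀ - β ^ n * lam (traj f x₀ u n) := by
  induction n with
  | zero => simp [traj]
  | succ n ih =>
    rw [Finset.sum_range_succ]
    have h := mul_le_mul_of_nonneg_left (hK n) (pow_nonneg hβ n)
    simp only [rot, traj, pow_succ] at *
    linarith

/-- lower bound on the rotated cost/value function under local
discounted strict dissipativity, along trajectories remaining in `X_N` resp. on an
invariant set `X_inv ⊆ X_N`. -/
theorem rotated_value_lower_bound_invariant
    (f : X → U → X) (Y : Set (X × U)) (ℓ : X → U → ℝ) (lam : X → ℝ)
    (β : ℝ) (hβ : β ∈ Set.Ioo (0 : ℝ) 1)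
    (hℓ : ∃ B : ℝ, ∀ p ∈ Y, |ℓ p.1 p.2| ≤ B)
    (xl : X) (ul : U) (X_N : Set X)
    (heq : (xl, ul) ∈ Y) (hfix : f xl ul = xl)
    (hXN : X_N ⊆ stateSet Y) (hXNnhds : X_N ∈ nhds xl)
    (hlam_lb : ∃ b : ℝ, ∀ x : X, b ≤ lam x) (hlam0 : lam xl = 0)
    (αβ : ℝ → ℝ) (hαβ : KInfty αβ)
    (hdiss : ∀ x ∈ X_N, ∀ v : U,
      αβ ‖x - xl‖ ≤ ℓ x v - ℓ xl ul + lam x - β * lam (f x v)) :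
    (∀ x₀ ∈ X_N, ∀ u : ℕ → U, Admissible f Y x₀ u →
      (∀ k : ℕ, traj f x₀ u k ∈ X_N) →
      αβ ‖x₀ - xl‖ ≤ Jinf β (rot β ℓ f lam xl ul) f x₀ u) ∧
    (∀ X_inv : Set X, X_inv ⊆ X_N →
      (∀ x ∈ X_inv, ∃ u : ℕ → U, Admissible f Y x u ∧
        Jinf β (rot β ℓ f lam xl ul) f x u = Vinf β (rot β ℓ f lam xl ul) f Y x ∧
        ∀ k : ℕ, traj f x u k ∈ X_inv) →
      ∀ x ∈ X_inv, αβ ‖x - xl‖ ≤ Vinf β (rot β ℓ f lam xl ul) f Y x) := by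
  have hA : ∀ x₀ ∈ X_N, ∀ u : ℕ → U, Admissible f Y x₀ u →
      (∀ k : ℕ, traj f x₀ u k ∈ X_N) →
      αβ ‖x₀ - xl‖ ≤ Jinf β (rot β ℓ f lam xl ul) f x₀ u := by
    intro x₀ hx₀ u hu hN
    obtain ⟨B, hB⟩ := hℓ
    obtain ⟨b, hb⟩ := hlam_lb
    have hβ0 : 0 ≤ β := hβ.1.le
    have hβ1 : 0 < 1 - β := sub_pos.2 hβ.2
    have hα : ∀ x : X, 0 ≤ αβ ‖x - xl‖ := fun x => by
      have h := hαβ.mono.monotoneOn (Set.mem_Ici.2 le_rfl) (Set.mem_Ici.2 (norm_nonneg (x - xl)))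
        (norm_nonneg (x - xl))
      rwa [hαβ.zero] at h
    have hnn : ∀ k, 0 ≤ β ^ k * rot β ℓ f lam xl ul (traj f x₀ u k) (u k) := fun k =>
      mul_nonneg (pow_nonneg hβ0 k) ((hα _).trans (hdiss _ (hN k) (u k)))
    have hsum : Summable fun k => β ^ k * rot β ℓ f lam xl ul (traj f x₀ u k) (u k) := by
      have he := abs_le.1 (hB _ heq)
      have hB0 : 0 ≤ B := (abs_nonneg _).trans (hB _ heq)
      refine summable_of_sum_range_le (c := 2 * B / (1 - β) + lam x₀ + |b|) hnn fun n => ?_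
      have h := sum_rot_le (lam := lam) (K := 2 * B / (1 - β)) hβ0 (xe := xl) (ue := ul)
        (fun k => by
          rw [div_mul_cancel₀ _ hβ1.ne']
          have := abs_le.1 (hB _ (hu k))
          dsimp only at this he
          linarith [this.2, he.1]) n
      have hK : 0 ≤ 2 * B / (1 - β) * β ^ n := by positivity
      -- `b` may be negative, so `β ^ n * b` is bounded below only by `-|b|`.
      have hbn : -|b| ≤ β ^ n * lam (traj f x₀ u n) := by
        have h1 := mul_le_mul_of_nonneg_left ((neg_abs_le b).trans (hb (traj f x₀ u n)))
          (pow_nonneg hβ0 n)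
        have h2 := mul_le_mul_of_nonneg_right (pow_le_one₀ hβ0 hβ.2.le (n := n)) (abs_nonneg b)
        linarith
      linarith
    calc αβ ‖x₀ - xl‖ ≤ β ^ 0 * rot β ℓ f lam xl ul (traj f x₀ u 0) (u 0) := by
          rw [pow_zero, one_mul]
          exact hdiss x₀ hx₀ (u 0)
      _ ≤ Jinf β (rot β ℓ f lam xl ul) f x₀ u := hsum.le_tsum 0 fun k _ => hnn k
  refine ⟨hA, fun X_inv hsub hinv x hx => ?_⟩
  obtain ⟨u, hu, hV, htr⟩ := hinv x hx
  rw [← hV]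
  exact hA x (hsub hx) u hu fun k => hsub (htr k)
end

section
/- (Exit lemma.) Let f : X × U → X be continuous at (x_l,u_l), where (x_l,u_l) satisfies f(x_l,u_l) = x_l, and let ρ > 0. Then there exists η ∈ (0,ρ] such that for every K ∈ ℕ with K ≥ 1 and every pair of sequences u : ℕ → U, x : ℕ → X with x(k+1) = f(x(k),u(k)) for all k, x(0) ∈ B_η(x_l), and x(K) ∉ B_ρ(x_l), there exists M ∈ {0,…,K−1} such that x(k) ∈ B_ρ(x_l) for all k ∈ {0,…,M} and either ‖x(M) − x_l‖ ≥ η or ‖u(M) − u_l‖ ≥ η. -/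
/-! Continuity at the equilibrium gives an `ε` such that every state-control pair `ε`-close to
`(xl, ul)` is mapped into the `ρ`-ball around `f xl ul = xl`; take `η = min ε ρ`. Since the
trajectory starts inside the `ρ`-ball, its first exit time is of the form `M + 1`, with
`M + 1 ≤ K`. If both `x M` and `u M` were `η`-close to the equilibrium, then
`x (M + 1) = f (x M) (u M)` would still be inside the ball. -/

open scoped BigOperators

variable {X U : Type*} [NormedAddCommGroup X] [NormedAddCommGroup U]

/-- Exit lemma: if a trajectory starts in `B_η(x_l)` and leaves
`B_ρ(x_l)` at time `K`, then at some time `M < K` the trajectory is still in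
`B_ρ(x_l)` up to time `M` and either the state or the control is `η`-far from
the equilibrium values. -/
theorem exit_lemma
    (f : X → U → X) (xl : X) (ul : U)
    (hf : ContinuousAt (fun p : X × U => f p.1 p.2) (xl, ul))
    (hfix : f xl ul = xl) (ρ : ℝ) (hρ : 0 < ρ) :
    ∃ η : ℝ, 0 < η ∧ η ≤ ρ ∧
      ∀ K : ℕ, 1 ≤ K → ∀ u : ℕ → U, ∀ x : ℕ → X,
        (∀ k : ℕ, x (k + 1) = f (x k) (u k)) →
        ‖x 0 - xl‖ < η → ρ ≤ ‖x K - xl‖ →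
        ∃ M < K, (∀ k ≤ M, ‖x k - xl‖ < ρ) ∧
          (η ≤ ‖x M - xl‖ ∨ η ≤ ‖u M - ul‖) := by
  obtain ⟨ε, hε, hball⟩ := Metric.continuousAt_iff.mp hf ρ hρ
  refine ⟨min ε ρ, lt_min hε hρ, min_le_right _ _, ?_⟩
  intro K _ u x hx h0 hK
  classical
  have hex : ∃ n, ρ ≤ ‖x n - xl‖ := ⟨K, hK⟩
  have hfirst : ρ ≤ ‖x (Nat.find hex) - xl‖ := Nat.find_spec hex
  have hle : Nat.find hex ≤ K := Nat.find_min' hex hK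
  have hbefore : ∀ k < Nat.find hex, ‖x k - xl‖ < ρ :=
    fun k hk => not_le.mp (Nat.find_min hex hk)
  generalize Nat.find hex = N at hfirst hle hbefore
  cases N with
  | zero => exact absurd (h0.trans_le (min_le_right _ _)) hfirst.not_gt
  | succ M =>
    refine ⟨M, hle, fun k hk => hbefore k (Nat.lt_succ_of_le hk), ?_⟩
    -- Otherwise `(x M, u M)` is so close to the equilibrium that one step stays in the `ρ`-ball.
    by_contra! hnear
    have hclose : dist (x M, u M) (xl, ul) < ε := by
      rw [Prod.dist_eq, dist_eq_norm, dist_eq_norm]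
      exact max_lt (hnear.1.trans_le (min_le_left _ _)) (hnear.2.trans_le (min_le_left _ _))
    have hstep := hball hclose
    simp only [hfix, ← hx, dist_eq_norm] at hstep
    exact hfirst.not_gt hstep
end

section
/- (Discounted sum lower bound.) Let β ∈ (0,1), δ > 0, m ≤ 0, and let M, K ∈ ℕ with M ≤ K. Let (c_k)_{k≥0} be a real sequence such that the series Σ_{k=0}^∞ β^k c_k converges (for instance (c_k) bounded), c_k ≥ 0 for all k ∈ {0,…,M−1}, c_M ≥ δ, and c_k ≥ m for all k ≥ M+1. Then Σ_{k=0}^∞ β^k c_k ≥ (β^M/(1−β))·((m−δ)β + δ); moreover, if β ≤ δ/(2(δ−m)), then Σ_{k=0}^∞ β^k c_k ≥ β^M δ/(2(1−β)) ≥ β^K δ/(2(1−β)) > 0. -/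
/-!
Split the series after the term of index `M`. The terms before `M` are nonnegative, so the head is at
least `β ^ M * δ`; comparing the tail with the geometric series `∑ β ^ k * m` bounds it below by
`β ^ (M + 1) * m / (1 - β)`. The sum of the two bounds is
`(β ^ M / (1 - β)) * ((m - δ) * β + δ)`. The threshold on `β` makes the last factor at least `δ / 2`,
and `β ^ K ≤ β ^ M` since `β ≤ 1`.
-/

/-- Discounted sum lower bound: lower bound on a discounted series whose
terms are nonnegative up to time `M−1`, at least `δ` at time `M` and at least `m ≤ 0`
afterwards, together with the consequences of the threshold `β ≤ δ/(2(δ−m))`. -/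
theorem discounted_sum_lower_bound
    (β : ℝ) (hβ : β ∈ Set.Ioo (0 : ℝ) 1)
    (δ : ℝ) (hδ : 0 < δ) (m : ℝ) (hm : m ≤ 0)
    (M K : ℕ) (hMK : M ≤ K)
    (c : ℕ → ℝ) (hsum : Summable (fun k : ℕ => β ^ k * c k))
    (h0 : ∀ k < M, 0 ≤ c k) (hM : δ ≤ c M) (hm' : ∀ k ≥ M + 1, m ≤ c k) :
    (β ^ M / (1 - β)) * ((m - δ) * β + δ) ≤ ∑' k : ℕ, β ^ k * c k ∧
      (β ≤ δ / (2 * (δ - m)) →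
        β ^ M * δ / (2 * (1 - β)) ≤ ∑' k : ℕ, β ^ k * c k ∧
        β ^ K * δ / (2 * (1 - β)) ≤ β ^ M * δ / (2 * (1 - β)) ∧
        0 < β ^ K * δ / (2 * (1 - β))) := by
  obtain ⟨hβ0, hβ1⟩ := hβ
  have hβ' : 0 < 1 - β := sub_pos.mpr hβ1
  have head : β ^ M * δ ≤ ∑ k ∈ Finset.range (M + 1), β ^ k * c k := by
    rw [Finset.sum_range_succ]
    have hnonneg : 0 ≤ ∑ k ∈ Finset.range M, β ^ k * c k :=
      Finset.sum_nonneg fun k hk =>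
        mul_nonneg (pow_pos hβ0 k).le (h0 k (Finset.mem_range.mp hk))
    have hterm : β ^ M * δ ≤ β ^ M * c M := by gcongr
    linarith
  have tail : β ^ (M + 1) * m / (1 - β) ≤ ∑' k : ℕ, β ^ (k + (M + 1)) * c (k + (M + 1)) := by
    have hgeo : HasSum (fun k : ℕ => β ^ (k + (M + 1)) * m) (β ^ (M + 1) * m / (1 - β)) := by
      have hfun : (fun k : ℕ => β ^ (k + (M + 1)) * m) = fun k => β ^ k * (β ^ (M + 1) * m) := by
        funext k
        ring
      rw [hfun, div_eq_inv_mul]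
      exact (hasSum_geometric_of_lt_one hβ0.le hβ1).mul_right (β ^ (M + 1) * m)
    refine hasSum_le (fun k => ?_) hgeo ((summable_nat_add_iff (M + 1)).mpr hsum).hasSum
    exact mul_le_mul_of_nonneg_left (hm' _ (by omega)) (pow_pos hβ0 _).le
  have main : (β ^ M / (1 - β)) * ((m - δ) * β + δ) ≤ ∑' k : ℕ, β ^ k * c k := by
    have hsplit := hsum.sum_add_tsum_nat_add (M + 1)
    have hbound : (β ^ M / (1 - β)) * ((m - δ) * β + δ)
        = β ^ M * δ + β ^ (M + 1) * m / (1 - β) := by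
      field_simp
      ring
    linarith
  refine ⟨main, fun hthr => ⟨le_trans ?_ main, ?_, by positivity⟩⟩
  · have hdm : 0 < 2 * (δ - m) := by linarith
    -- The threshold on `β` is exactly the condition `δ / 2 ≤ (m - δ) * β + δ`.
    have hhalf : δ / 2 ≤ (m - δ) * β + δ := by
      have := (le_div_iff₀ hdm).mp hthr
      linarith
    calc β ^ M * δ / (2 * (1 - β)) = (β ^ M / (1 - β)) * (δ / 2) := by
          field_simp
      _ ≤ (β ^ M / (1 - β)) * ((m - δ) * β + δ) := by gcongr
  · have hpow : β ^ K ≤ β ^ M := pow_le_pow_of_le_one hβ0.le hβ1.le hMK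
    gcongr
end

section
/- (Generalized threshold.) Let β ∈ (0,1), δ > 0, m ≤ 0, n ∈ ℕ with n ≥ 1, and let M, K ∈ ℕ with M ≤ K. Let (c_k)_{k≥0} be a real sequence such that Σ_{k=0}^∞ β^k c_k converges, c_k ≥ 0 for all k ∈ {0,…,M−1}, c_M ≥ δ, and c_k ≥ m for all k ≥ M+1. If β ≤ (n/(n+1))·δ/(δ−m), then Σ_{k=0}^∞ β^k c_k ≥ β^M δ/((n+1)(1−β)) ≥ β^K δ/((n+1)(1−β)) > 0. -/
/-!
Dropping the nonnegative terms before index `M` and bounding the tail by a geometric series gives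
`∑ β ^ k c_k ≥ β ^ M δ + β ^ (M + 1) m / (1 - β) = β ^ M (δ - β (δ - m)) / (1 - β)`.
The threshold on `β` says exactly `β (δ - m) ≤ n δ / (n + 1)`, i.e.
`δ - β (δ - m) ≥ δ / (n + 1)`, which is the first inequality; the other two hold because
`β ^ K ≤ β ^ M` and everything in sight is positive.
-/


/-- Generalized threshold: the discounted sum lower bound with the
fraction `1/2` replaced by `1/(n+1)` and threshold `β ≤ (n/(n+1))·δ/(δ−m)`. -/
theorem discounted_sum_lower_bound_general
    (β : ℝ) (hβ : β ∈ Set.Ioo (0 : ℝ) 1)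
    (δ : ℝ) (hδ : 0 < δ) (m : ℝ) (hm : m ≤ 0)
    (n : ℕ) (hn : 1 ≤ n)
    (M K : ℕ) (hMK : M ≤ K)
    (c : ℕ → ℝ) (hsum : Summable (fun k : ℕ => β ^ k * c k))
    (h0 : ∀ k < M, 0 ≤ c k) (hM : δ ≤ c M) (hm' : ∀ k ≥ M + 1, m ≤ c k)
    (hβth : β ≤ ((n : ℝ) / (n + 1)) * (δ / (δ - m))) :
    β ^ M * δ / ((n + 1) * (1 - β)) ≤ ∑' k : ℕ, β ^ k * c k ∧
      β ^ K * δ / ((n + 1) * (1 - β)) ≤ β ^ M * δ / ((n + 1) * (1 - β)) ∧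
      0 < β ^ K * δ / ((n + 1) * (1 - β)) := by
  obtain ⟨hβ0, hβ1⟩ := hβ
  have h1β : 0 < 1 - β := by linarith
  have hn1 : (0 : ℝ) < n + 1 := by positivity
  have hd : 0 < (n + 1) * (1 - β) := by positivity
  refine ⟨?_, ?_, by positivity⟩
  · have htail : β ^ (M + 1) * m * (1 - β)⁻¹ ≤ ∑' k : ℕ, β ^ (k + (M + 1)) * c (k + (M + 1)) := by
      have hg := (hasSum_geometric_of_lt_one hβ0.le hβ1).mul_left (β ^ (M + 1) * m)
      refine hasSum_le (fun k => ?_) hg ((summable_nat_add_iff (M + 1)).2 hsum).hasSum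
      calc β ^ (M + 1) * m * β ^ k = β ^ (k + (M + 1)) * m := by ring
        _ ≤ _ := mul_le_mul_of_nonneg_left (hm' _ (by omega)) (by positivity)
    have hinit : 0 ≤ ∑ k ∈ Finset.range M, β ^ k * c k :=
      Finset.sum_nonneg fun k hk => mul_nonneg (by positivity) (h0 k (Finset.mem_range.1 hk))
    have hmid : β ^ M * δ ≤ β ^ M * c M := mul_le_mul_of_nonneg_left hM (by positivity)
    have hkey : δ / (n + 1) ≤ δ - β * (δ - m) := by
      have hδm : 0 < δ - m := by linarith
      have h1 : β * (δ - m) ≤ (n : ℝ) / (n + 1) * δ := by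
        calc β * (δ - m) ≤ (n : ℝ) / (n + 1) * (δ / (δ - m)) * (δ - m) :=
              mul_le_mul_of_nonneg_right hβth hδm.le
          _ = _ := by field_simp
      have h2 : δ / (n + 1) = δ - (n : ℝ) / (n + 1) * δ := by
        field_simp
        ring
      linarith
    have hlow : β ^ M * δ / ((n + 1) * (1 - β)) ≤ β ^ M * δ + β ^ (M + 1) * m * (1 - β)⁻¹ := by
      calc β ^ M * δ / ((n + 1) * (1 - β)) = β ^ M * (1 - β)⁻¹ * (δ / (n + 1)) := by
            field_simp
        _ ≤ β ^ M * (1 - β)⁻¹ * (δ - β * (δ - m)) :=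
            mul_le_mul_of_nonneg_left hkey (by positivity)
        _ = _ := by
            field_simp
            ring
    rw [← hsum.sum_add_tsum_nat_add (M + 1), Finset.sum_range_succ]
    linarith
  · have hpow : β ^ K ≤ β ^ M := pow_le_pow_of_le_one hβ0.le hβ1.le hMK
    gcongr
end

section
/- (Lower bound on the rotated cost for escaping trajectories.) Let β ∈ (0,1), let f be continuous, let ℓ be bounded on Y and bounded from below, and assume the system is locally discounted strictly (x,u)-dissipative at (x_l^β,u_l^β) on X_N with bounded storage λ and α_β ∈ K∞. Let ρ > 0 be such that B_ρ(x_l^β) ⊆ X_N, let η ∈ (0,ρ] satisfy ‖f(x,u) − x_l^β‖ < ρ whenever (x,u) ∈ Y, ‖x − x_l^β‖ < η and ‖u − u_l^β‖ < η, set δ := α_β(η) and ℓ̃_min := inf{ℓ̃(x,u) : (x,u) ∈ Y}, and assume ℓ̃_min < 0. If β < δ/(2(δ − ℓ̃_min)), then for every K ∈ ℕ and every x₀ ∈ B_η(x_l^β) with admissible control u whose trajectory satisfies x_u(P,x₀) ∉ B_ρ(x_l^β) for some P ∈ {1,…,K}, one has J̃_∞(x₀,u) ≥ β^K δ/(2(1−β))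 > 0. -/
/-!
Let `m + 1` be the first time at which the trajectory is outside `B_ρ(xl)`; then `m + 1 ≤ K`.
Up to time `m` the state lies in `X_N`, so the rotated stage cost is nonnegative. At time `m` the
state or the control is at distance at least `η` from the equilibrium, since otherwise the next
state would still be in `B_ρ(xl)`; hence the rotated stage cost there is at least `αβ η = δ`.
From time `m + 1` on it is at least `lmin`. The geometric series gives
`J̃ ≥ β ^ m δ + β ^ (m + 1) lmin / (1 - β)` (`geom_tail_lower_bound`), and the bound on `β` says
exactly that `δ (1 - β) + β lmin > δ / 2`, so
`J̃ ≥ β ^ m δ / (2 (1 - β)) ≥ β ^ K δ / (2 (1 - β))`.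
-/

open scoped BigOperators

variable {X U : Type*} [NormedAddCommGroup X] [NormedAddCommGroup U]

/-- A bounded discounted series that is nonnegative before index `m`, at least `δ` at `m` and at
least `c` afterwards. Boundedness gives summability, without which `tsum` would be the junk
value `0`. -/
theorem geom_tail_lower_bound {β δ c B : ℝ} (h0 : 0 < β) (h1 : β < 1) (g : ℕ → ℝ) (m : ℕ)
    (hB : ∀ k, |g k| ≤ B) (hpre : ∀ k < m, 0 ≤ g k) (hm : δ ≤ g m) (hc : ∀ k, c ≤ g k) :
    β ^ m * δ + β ^ (m + 1) * (c / (1 - β)) ≤ ∑' k, β ^ k * g k := by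
  have hgeo := summable_geometric_of_lt_one h0.le h1
  have hs : Summable fun k => β ^ k * g k := by
    refine Summable.of_norm_bounded (hgeo.mul_right B) fun k => ?_
    rw [Real.norm_eq_abs, abs_mul, abs_of_pos (pow_pos h0 k)]
    exact mul_le_mul_of_nonneg_left (hB k) (pow_pos h0 k).le
  rw [← hs.sum_add_tsum_nat_add (m + 1), Finset.sum_range_succ]
  have hsum : 0 ≤ ∑ k ∈ Finset.range m, β ^ k * g k :=
    Finset.sum_nonneg fun k hk => mul_nonneg (pow_pos h0 k).le (hpre k (Finset.mem_range.1 hk))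
  have hlast : β ^ m * δ ≤ β ^ m * g m := mul_le_mul_of_nonneg_left hm (pow_pos h0 m).le
  have htail : β ^ (m + 1) * (c / (1 - β)) ≤ ∑' k, β ^ (k + (m + 1)) * g (k + (m + 1)) := by
    have hG := ((hasSum_geometric_of_lt_one h0.le h1).mul_right c).mul_left (β ^ (m + 1))
    have heq : β ^ (m + 1) * (c / (1 - β)) = β ^ (m + 1) * ((1 - β)⁻¹ * c) := by
      rw [div_eq_inv_mul]
    rw [heq]
    refine hasSum_le (fun k => ?_) hG ((summable_nat_add_iff (m + 1)).2 hs).hasSum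
    rw [← mul_assoc, ← pow_add, add_comm (m + 1) k]
    exact mul_le_mul_of_nonneg_left (hc _) (pow_pos h0 _).le
  linarith

/-- lower bound `J̃_∞(x₀,u) ≥ β^K δ/(2(1−β)) > 0` on the rotated cost of
trajectories that start in `B_η(x_l^β)` and escape from `B_ρ(x_l^β)` within `K` steps,
for discount factors below the threshold `δ/(2(δ − ℓ̃_min))`. -/
theorem rotated_cost_escape_lower_bound
    (f : X → U → X) (Y : Set (X × U)) (ℓ : X → U → ℝ) (lam : X → ℝ)
    (β : ℝ) (hβ : β ∈ Set.Ioo (0 : ℝ) 1)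
    (hf : Continuous fun p : X × U => f p.1 p.2)
    (hℓ_bdd : ∃ B : ℝ, ∀ p ∈ Y, |ℓ p.1 p.2| ≤ B)
    (hℓ_lb : ∃ m : ℝ, ∀ (x : X) (v : U), m ≤ ℓ x v)
    (xl : X) (ul : U) (X_N : Set X)
    (heq : (xl, ul) ∈ Y) (hfix : f xl ul = xl)
    (hXN : X_N ⊆ stateSet Y) (hXNnhds : X_N ∈ nhds xl)
    (hlam_bdd : ∃ B : ℝ, ∀ x : X, |lam x| ≤ B) (hlam0 : lam xl = 0)
    (αβ : ℝ → ℝ) (hαβ : KInfty αβ)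
    (hdiss : ∀ x ∈ X_N, ∀ v : U,
      αβ (‖x - xl‖ + ‖v - ul‖) ≤ ℓ x v - ℓ xl ul + lam x - β * lam (f x v))
    (ρ : ℝ) (hρ : 0 < ρ) (hball : Metric.ball xl ρ ⊆ X_N)
    (η : ℝ) (hη0 : 0 < η) (hηρ : η ≤ ρ)
    (hηf : ∀ p ∈ Y, ‖p.1 - xl‖ < η → ‖p.2 - ul‖ < η → ‖f p.1 p.2 - xl‖ < ρ)
    (δ lmin : ℝ) (hδ : δ = αβ η)
    (hlmin : lmin = sInf {r : ℝ | ∃ p ∈ Y, rot β ℓ f lam xl ul p.1 p.2 = r})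
    (hlmin_neg : lmin < 0)
    (hβth : β < δ / (2 * (δ - lmin)))
    (K : ℕ) (x₀ : X) (hx₀ : ‖x₀ - xl‖ < η)
    (u : ℕ → U) (hu : Admissible f Y x₀ u)
    (hesc : ∃ P : ℕ, 1 ≤ P ∧ P ≤ K ∧ ρ ≤ ‖traj f x₀ u P - xl‖) :
    β ^ K * δ / (2 * (1 - β)) ≤ Jinf β (rot β ℓ f lam xl ul) f x₀ u ∧
      0 < β ^ K * δ / (2 * (1 - β)) := by
  classical
  obtain ⟨h0, h1⟩ := hβ
  obtain ⟨B, hB⟩ := hℓ_bdd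
  obtain ⟨L, hL⟩ := hlam_bdd
  have h1β : 0 < 1 - β := sub_pos.2 h1
  have hδpos : 0 < δ := by
    rw [hδ, ← hαβ.zero]
    exact hαβ.mono Set.self_mem_Ici hη0.le hη0
  have hα_nonneg : ∀ r, 0 ≤ r → 0 ≤ αβ r := fun r hr => by
    have := hαβ.mono.monotoneOn Set.self_mem_Ici hr hr
    rwa [hαβ.zero] at this
  have hrotB : ∀ p ∈ Y, |rot β ℓ f lam xl ul p.1 p.2| ≤ 2 * B + 2 * L := fun p hp => by
    have a1 := abs_le.1 (hB p hp)
    have a2 := abs_le.1 (hB _ heq)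
    have a3 := abs_le.1 (hL p.1)
    have a4 : |β * lam (f p.1 p.2)| ≤ L := by
      rw [abs_mul, abs_of_pos h0]
      exact (mul_le_of_le_one_left (abs_nonneg _) h1.le).trans (hL _)
    have a4 := abs_le.1 a4
    dsimp only at a2
    unfold rot
    rw [abs_le]
    constructor <;> linarith [a1.1, a1.2, a2.1, a2.2, a3.1, a3.2, a4.1, a4.2]
  -- `sInf` is a genuine lower bound because the rotated cost is bounded on `Y`.
  have hrot_min : ∀ p ∈ Y, lmin ≤ rot β ℓ f lam xl ul p.1 p.2 := fun p hp => by
    rw [hlmin]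
    refine csInf_le ⟨-(2 * B + 2 * L), ?_⟩ ⟨p, hp, rfl⟩
    rintro r ⟨q, hq, rfl⟩
    exact (abs_le.1 (hrotB q hq)).1
  have hex : ∃ P, ρ ≤ ‖traj f x₀ u P - xl‖ := by
    obtain ⟨P, -, -, hP⟩ := hesc
    exact ⟨P, hP⟩
  obtain ⟨m, hmK, hm_esc, hm_in⟩ : ∃ m, m + 1 ≤ K ∧ ρ ≤ ‖traj f x₀ u (m + 1) - xl‖ ∧
      ∀ k ≤ m, ‖traj f x₀ u k - xl‖ < ρ := by
    have hne : Nat.find hex ≠ 0 := fun h => by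
      have hsp := Nat.find_spec hex
      rw [h] at hsp
      exact absurd (hx₀.trans_le hηρ) (not_lt.2 hsp)
    obtain ⟨m, hm⟩ := Nat.exists_eq_succ_of_ne_zero hne
    refine ⟨m, ?_, ?_, fun k hk => ?_⟩
    · obtain ⟨P, -, hPK, hP⟩ := hesc
      have := Nat.find_min' hex hP
      omega
    · have hsp := Nat.find_spec hex
      rwa [hm] at hsp
    · exact not_le.1 (Nat.find_min hex (by omega))
  have hN : ∀ k ≤ m, traj f x₀ u k ∈ X_N := fun k hk =>
    hball (by rw [mem_ball_iff_norm]; exact hm_in k hk)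
  have hpre : ∀ k < m, 0 ≤ rot β ℓ f lam xl ul (traj f x₀ u k) (u k) := fun k hk =>
    (hα_nonneg _ (by positivity)).trans (hdiss _ (hN k hk.le) (u k))
  have hlast : δ ≤ rot β ℓ f lam xl ul (traj f x₀ u m) (u m) := by
    refine le_trans ?_ (hdiss _ (hN m le_rfl) (u m))
    rw [hδ]
    refine hαβ.mono.monotoneOn hη0.le (Set.mem_Ici.2 (by positivity)) ?_
    by_contra! hlt
    have := hηf _ (hu m) (by linarith [norm_nonneg (u m - ul)])
      (by linarith [norm_nonneg (traj f x₀ u m - xl)])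
    exact absurd this (not_lt.2 hm_esc)
  have key := geom_tail_lower_bound h0 h1
    (fun k => rot β ℓ f lam xl ul (traj f x₀ u k) (u k)) m
    (fun k => hrotB _ (hu k)) hpre hlast (fun k => hrot_min _ (hu k))
  refine ⟨le_trans ?_ key, by positivity⟩
  have hpow : β ^ K ≤ β ^ m := pow_le_pow_of_le_one h0.le h1.le (by omega)
  have hth : δ / 2 ≤ δ * (1 - β) + β * lmin := by
    rw [lt_div_iff₀ (by linarith)] at hβth
    linarith
  have hrw : β ^ m * δ + β ^ (m + 1) * (lmin / (1 - β))
      = β ^ m * (δ * (1 - β) + β * lmin) / (1 - β) := by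
    field_simp
    ring
  calc β ^ K * δ / (2 * (1 - β)) = β ^ K * (δ / 2) / (1 - β) := by field_simp
    _ ≤ β ^ m * (δ * (1 - β) + β * lmin) / (1 - β) := by gcongr
    _ = _ := hrw.symm
end

section
/- (Dissipativity of a nonconvex example.) For all real numbers x, u and every β ∈ [3/5, 1): (−x²/2 + u²) + (−x²) − β·(−(2x+u)²) = (4β − 3/2)·x² + 4β·x·u + (1+β)·u² ≥ ((2β/√(1+β))·x + √(1+β)·u)². In particular, the scalar system x⁺ = 2x + u with stage cost ℓ(x,u) = −x²/2 + u² and storage function λ(x) = −x² satisfies the dissipation inequality ℓ(x,u) + λ(x) − β·λ(2x+u) ≥ ((2β/√(1+β))·x + √(1+β)·u)² ≥ 0 for all x, u ∈ ℝ and all β ∈ [3/5, 1), even though ℓ is strictly concave in x. -/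
/-!
Completing the square in `u` turns the dissipation surplus into the stated square plus
`(5 * β - 3) / (2 * (1 + β)) * x ^ 2`, and this remainder is nonnegative exactly when `3 / 5 ≤ β`
(given `0 < 1 + β`). Strict concavity is the identity
`f (a y + b z) - a f y - b f z = a b (y - z) ^ 2 / 2` for `a + b = 1`.
-/

/-- dissipativity of the nonconvex example `x⁺ = 2x + u` with stage cost
`ℓ(x,u) = −x²/2 + u²` and storage function `λ(x) = −x²` for `β ∈ [3/5, 1)`, even though
`ℓ` is strictly concave in `x`. -/
theorem nonconvex_example_dissipativity
    (β : ℝ) (hβ : β ∈ Set.Ico (3 / 5 : ℝ) 1) (x u : ℝ) :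
    ((-x ^ 2 / 2 + u ^ 2) + (-x ^ 2) - β * (-(2 * x + u) ^ 2) =
        (4 * β - 3 / 2) * x ^ 2 + 4 * β * x * u + (1 + β) * u ^ 2) ∧
      ((2 * β / Real.sqrt (1 + β) * x + Real.sqrt (1 + β) * u) ^ 2 ≤
        (4 * β - 3 / 2) * x ^ 2 + 4 * β * x * u + (1 + β) * u ^ 2) ∧
      (0 ≤ (2 * β / Real.sqrt (1 + β) * x + Real.sqrt (1 + β) * u) ^ 2) ∧
      ((2 * β / Real.sqrt (1 + β) * x + Real.sqrt (1 + β) * u) ^ 2 ≤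
        (-x ^ 2 / 2 + u ^ 2) + (-x ^ 2) - β * (-(2 * x + u) ^ 2)) ∧
      StrictConcaveOn ℝ Set.univ fun y : ℝ => -y ^ 2 / 2 + u ^ 2 := by
  have hβ0 : (3 / 5 : ℝ) ≤ β := hβ.1
  have hpos : 0 < 1 + β := by linarith
  have hs : 0 < Real.sqrt (1 + β) := Real.sqrt_pos.mpr hpos
  have hsq : Real.sqrt (1 + β) ^ 2 = 1 + β := Real.sq_sqrt hpos.le
  have hexp : (2 * β / Real.sqrt (1 + β) * x + Real.sqrt (1 + β) * u) ^ 2 =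
      4 * β ^ 2 / (1 + β) * x ^ 2 + 4 * β * x * u + (1 + β) * u ^ 2 := by
    have h1 : (2 * β / Real.sqrt (1 + β)) ^ 2 = 4 * β ^ 2 / (1 + β) := by
      rw [div_pow, hsq]; ring
    have h2 : 2 * β / Real.sqrt (1 + β) * Real.sqrt (1 + β) = 2 * β :=
      div_mul_cancel₀ _ hs.ne'
    linear_combination x ^ 2 * h1 + 2 * x * u * h2 + u ^ 2 * hsq
  have hcoef : 4 * β ^ 2 / (1 + β) ≤ 4 * β - 3 / 2 := by
    rw [div_le_iff₀ hpos]
    linarith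
  have hsurplus : (-x ^ 2 / 2 + u ^ 2) + (-x ^ 2) - β * (-(2 * x + u) ^ 2) =
      (4 * β - 3 / 2) * x ^ 2 + 4 * β * x * u + (1 + β) * u ^ 2 := by ring
  have hle : (2 * β / Real.sqrt (1 + β) * x + Real.sqrt (1 + β) * u) ^ 2 ≤
      (4 * β - 3 / 2) * x ^ 2 + 4 * β * x * u + (1 + β) * u ^ 2 := by
    rw [hexp]
    gcongr
  refine ⟨hsurplus, hle, sq_nonneg _, hsurplus ▸ hle, convex_univ, ?_⟩
  intro y _ z _ hyz a b ha hb hab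
  simp only [smul_eq_mul]
  have hgap : 0 < a * b * (y - z) ^ 2 :=
    mul_pos (mul_pos ha hb) (sq_pos_of_ne_zero (sub_ne_zero.mpr hyz))
  obtain rfl : b = 1 - a := by linarith
  linarith
end
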